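/- Assume X has linearly independent rows (equivalently, XXᵀ is invertible) and that S := D(I − γP) is invertible. Let w₀ := Xᵀ(XXᵀ)⁻¹y. Then: (i) Xw₀ = y and ‖w₀‖₂ ≤ ‖w‖₂ for every w ∈ ℝᵈ with Xw = y (w₀ is the minimum-norm ordinary least squares solution); (ii) Aw₀ = b and ‖w₀‖₂ ≤ ‖w‖₂ for every w ∈ ℝᵈ with Aw = b (w₀ is also the minimum-norm solution of the TD linear system); and (iii) every w ∈ ℝᵈ with Xw = y satisfies Aw = b. -/

import Mathlib

open scoped BigOperators
open Matrix

/-- The Euclidean (ℓ2) norm of a vector in `Fin d → ℝ`. -/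
noncomputable def l2norm {d : ℕ} (w : Fin d → ℝ) : ℝ :=
  Real.sqrt (∑ i, w i ^ 2)

/-! A vector `Xᴴ z` is orthogonal to the kernel of `X`, so by Pythagoras it is the shortest solution
of any system `X w = y` that it solves. Since `X Xᴴ` and `S` are invertible, `Xᴴ S` is injective, so
`Xᴴ S X w = Xᴴ S y` has the same solutions as `X w = y`, hence the same shortest one. -/

section MulVec

variable {R k m n : Type*} [NonUnitalSemiring R] [Fintype m] [Fintype n]

theorem mulVec_injective_of_mul {A : Matrix k m R} {B : Matrix m n R}
    (hAB : Function.Injective (A * B).mulVec) : Function.Injective B.mulVec := by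
  refine Function.Injective.of_comp (f := A.mulVec) ?_
  simpa only [Function.comp_def, mulVec_mulVec] using hAB

theorem mul_mulVec_eq_mulVec_iff {M : Matrix k m R} (hM : Function.Injective M.mulVec)
    (X : Matrix m n R) (w : n → R) (y : m → R) : (M * X) *ᵥ w = M *ᵥ y ↔ X *ᵥ w = y := by
  rw [← mulVec_mulVec, hM.eq_iff]

end MulVec

theorem mul_mulVec_injective_of_isUnit {R m n : Type*} [Semiring R] [Fintype m] [DecidableEq m]
    [Fintype n] {X : Matrix m n R} {Y : Matrix n m R} {S : Matrix m m R} (hXY : IsUnit (X * Y))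
    (hS : IsUnit S) : Function.Injective (Y * S).mulVec := by
  apply mulVec_injective_of_mul (A := X)
  rw [← Matrix.mul_assoc]
  exact mulVec_injective_of_isUnit (hXY.mul hS)

theorem norm_le_norm_of_inner_sub_eq_zero {𝕜 E : Type*} [RCLike 𝕜] [SeminormedAddCommGroup E]
    [InnerProductSpace 𝕜 E] {x y : E} (h : inner 𝕜 x (y - x) = 0) : ‖x‖ ≤ ‖y‖ := by
  have pythagoras := norm_add_sq_eq_norm_sq_add_norm_sq_of_inner_eq_zero x (y - x) h
  rw [add_sub_cancel] at pythagoras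
  refine nonneg_le_nonneg_of_sq_le_sq (norm_nonneg y) ?_
  exact pythagoras ▸ le_add_of_nonneg_right (mul_self_nonneg ‖y - x‖)

section MinNorm

variable {𝕜 k m n : Type*} [RCLike 𝕜] [Fintype n]

/-- `w` is a minimum-norm solution of the linear system `A w = b`. The norm is taken after
`WithLp.toLp 2` because `n → 𝕜` itself carries the sup norm. -/
def IsMinNormSolution (A : Matrix m n 𝕜) (b : m → 𝕜) (w : n → 𝕜) : Prop :=
  A *ᵥ w = b ∧ ∀ v, A *ᵥ v = b → ‖WithLp.toLp 2 w‖ ≤ ‖WithLp.toLp 2 v‖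

theorem isMinNormSolution_congr {A : Matrix k n 𝕜} {b : k → 𝕜} {B : Matrix m n 𝕜} {c : m → 𝕜}
    (h : ∀ v, A *ᵥ v = b ↔ B *ᵥ v = c) (w : n → 𝕜) :
    IsMinNormSolution A b w ↔ IsMinNormSolution B c w := by
  simp only [IsMinNormSolution, h]

variable [Fintype m]

theorem inner_conjTranspose_mulVec (X : Matrix m n 𝕜) (z : m → 𝕜) (v : n → 𝕜) :
    inner 𝕜 (WithLp.toLp 2 (Xᴴ *ᵥ z)) (WithLp.toLp 2 v) =
      inner 𝕜 (WithLp.toLp 2 z) (WithLp.toLp 2 (X *ᵥ v)) := by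
  simp only [EuclideanSpace.inner_toLp_toLp, star_mulVec, conjTranspose_conjTranspose]
  rw [dotProduct_comm, ← dotProduct_mulVec, dotProduct_comm]

theorem isMinNormSolution_conjTranspose_mulVec {X : Matrix m n 𝕜} {y z : m → 𝕜}
    (hz : X *ᵥ (Xᴴ *ᵥ z) = y) : IsMinNormSolution X y (Xᴴ *ᵥ z) := by
  refine ⟨hz, fun v hv => norm_le_norm_of_inner_sub_eq_zero (𝕜 := 𝕜) ?_⟩
  have hker : X *ᵥ (v - Xᴴ *ᵥ z) = 0 := by rw [mulVec_sub, hv, hz, sub_self]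
  rw [← WithLp.toLp_sub, inner_conjTranspose_mulVec, hker, WithLp.toLp_zero, inner_zero_right]

theorem isMinNormSolution_conjTranspose_mul_inv_mulVec [DecidableEq m] {X : Matrix m n 𝕜}
    (hX : IsUnit (X * Xᴴ)) (y : m → 𝕜) :
    IsMinNormSolution X y ((Xᴴ * (X * Xᴴ)⁻¹) *ᵥ y) := by
  rw [← mulVec_mulVec]
  apply isMinNormSolution_conjTranspose_mulVec
  rw [mulVec_mulVec, mulVec_mulVec, mul_nonsing_inv _ ((isUnit_iff_isUnit_det _).mp hX),
    one_mulVec]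

theorem td_ols_min_norm_general [DecidableEq m] {X : Matrix m n 𝕜} {S : Matrix m m 𝕜}
    (hX : IsUnit (X * Xᴴ)) (hS : IsUnit S) (y : m → 𝕜) :
    IsMinNormSolution X y ((Xᴴ * (X * Xᴴ)⁻¹) *ᵥ y) ∧
    IsMinNormSolution (Xᴴ * S * X) ((Xᴴ * S) *ᵥ y) ((Xᴴ * (X * Xᴴ)⁻¹) *ᵥ y) ∧
    ∀ w, X *ᵥ w = y ↔ (Xᴴ * S * X) *ᵥ w = (Xᴴ * S) *ᵥ y := by
  have hiff (w : n → 𝕜) : X *ᵥ w = y ↔ (Xᴴ * S * X) *ᵥ w = (Xᴴ * S) *ᵥ y :=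
    (mul_mulVec_eq_mulVec_iff (mul_mulVec_injective_of_isUnit hX hS) X w y).symm
  have hOLS := isMinNormSolution_conjTranspose_mul_inv_mulVec hX y
  exact ⟨hOLS, (isMinNormSolution_congr hiff _).mp hOLS, hiff⟩

end MinNorm

theorem l2norm_eq_norm_toLp {d : ℕ} (w : Fin d → ℝ) : l2norm w = ‖WithLp.toLp 2 w‖ := by
  simp only [l2norm, EuclideanSpace.norm_eq, Real.norm_eq_abs, sq_abs]

/-- With `S := D (I - γ P)` invertible and `X` having linearly independent
rows (i.e. `X Xᵀ` invertible), the vector `w₀ := Xᵀ (X Xᵀ)⁻¹ y` is (i) the minimum-norm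
solution of `X w = y` (OLS), (ii) the minimum-norm solution of the TD system `A w = b`
with `A := Xᵀ S X`, `b := Xᵀ S y`, and (iii) every solution of `X w = y` solves `A w = b`. -/
theorem td_ols_min_norm {n d : ℕ} (X : Matrix (Fin n) (Fin d) ℝ) (y : Fin n → ℝ)
    (D P : Matrix (Fin n) (Fin n) ℝ) (γ : ℝ)
    (hDdiag : ∀ i j, i ≠ j → D i j = 0) (hDpos : ∀ i, 0 < D i i)
    (hPnonneg : ∀ i j, 0 ≤ P i j) (hProw : ∀ i, ∑ j, P i j = 1)
    (hγ0 : 0 ≤ γ) (hγ1 : γ < 1)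
    (hX : IsUnit (X * Xᵀ))
    (hS : IsUnit (D * (1 - γ • P))) :
    (X.mulVec ((Xᵀ * (X * Xᵀ)⁻¹).mulVec y) = y ∧
      ∀ w : Fin d → ℝ, X.mulVec w = y →
        l2norm ((Xᵀ * (X * Xᵀ)⁻¹).mulVec y) ≤ l2norm w) ∧
    ((Xᵀ * (D * (1 - γ • P)) * X).mulVec ((Xᵀ * (X * Xᵀ)⁻¹).mulVec y) =
        (Xᵀ * (D * (1 - γ • P))).mulVec y ∧
      ∀ w : Fin d → ℝ,
        (Xᵀ * (D * (1 - γ • P)) * X).mulVec w = (Xᵀ * (D * (1 - γ • P))).mulVec y →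
          l2norm ((Xᵀ * (X * Xᵀ)⁻¹).mulVec y) ≤ l2norm w) ∧
    (∀ w : Fin d → ℝ, X.mulVec w = y →
      (Xᵀ * (D * (1 - γ • P)) * X).mulVec w = (Xᵀ * (D * (1 - γ • P))).mulVec y) := by
  simp only [l2norm_eq_norm_toLp, ← conjTranspose_eq_transpose_of_trivial] at hX ⊢
  exact (td_ols_min_norm_general hX hS y).imp_right (And.imp_right fun h w => (h w).mp)
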